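/- (Band embedding) Let n_b ∈ ℂ and a₁, a₂ ∈ ℝ. The band-embedding constraint 2a₂ ≤ conj(T(θ))·n_b + conj(n_b)·T(θ) ≤ 2a₁ (equivalently a₂ ≤ Re(conj(n_b)·T(θ)) ≤ a₁) holds for every θ in the ellipsoid U if and only if there exist real scalars ξ₁ ≥ 0, ξ₂ ≥ 0 and real skew-symmetric matrices 𝒳₁, 𝒳₂ ∈ ℝ^{(n+1)×(n+1)} such that both Hermitian complex matrices A₂*·n_b + conj(n_b)·A₂ − 2a₁·A₁ − ξ₁·B + i𝒳₁ and −A₂*·n_b − conj(n_b)·A₂ + 2a₂·A₁ − ξ₂·B + i𝒳₂ are negative semidefinite. -/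

import Mathlib

open Matrix
open scoped ComplexOrder

/-- The transfer function value `T(θ) = (e + Z_N·θ)/(1 + Z_D·θ)`. -/
noncomputable def Tval {n : ℕ} (e : ℂ) (ZN ZD : Fin n → ℂ) (θ : Fin n → ℝ) : ℂ :=
  (e + ∑ i, ZN i * (θ i : ℂ)) / (1 + ∑ i, ZD i * (θ i : ℂ))

/-- The ellipsoid `U = {θ ∈ ℝⁿ : (θ−θ̂)ᵀP⁻¹(θ−θ̂) < χ}`. -/
noncomputable def ellipsoid {n : ℕ} (P : Matrix (Fin n) (Fin n) ℝ) (θhat : Fin n → ℝ)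
    (χ : ℝ) : Set (Fin n → ℝ) :=
  {θ | (θ - θhat) ⬝ᵥ P⁻¹ *ᵥ (θ - θhat) < χ}

/-- The Hermitian matrix `A₁ = [[Z_D*Z_D, Z_D*],[Z_D, 1]] ∈ ℂ^{(n+1)×(n+1)}`. -/
def A1mat {n : ℕ} (ZD : Fin n → ℂ) : Matrix (Fin n ⊕ Unit) (Fin n ⊕ Unit) ℂ :=
  Matrix.fromBlocks
    (Matrix.of fun i j => starRingEnd ℂ (ZD i) * ZD j)
    (Matrix.of fun i _ => starRingEnd ℂ (ZD i))
    (Matrix.of fun _ j => ZD j)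
    (Matrix.of fun _ _ => 1)

/-- The matrix `A₂ = [[Z_D*Z_N, Z_D*e],[Z_N, e]] ∈ ℂ^{(n+1)×(n+1)}`. -/
def A2mat {n : ℕ} (e : ℂ) (ZN ZD : Fin n → ℂ) : Matrix (Fin n ⊕ Unit) (Fin n ⊕ Unit) ℂ :=
  Matrix.fromBlocks
    (Matrix.of fun i j => starRingEnd ℂ (ZD i) * ZN j)
    (Matrix.of fun i _ => starRingEnd ℂ (ZD i) * e)
    (Matrix.of fun _ j => ZN j)
    (Matrix.of fun _ _ => e)

/-- The real symmetric matrix `B = [[P⁻¹, −P⁻¹θ̂],[−θ̂ᵀP⁻¹, θ̂ᵀP⁻¹θ̂ − χ]]`. -/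
noncomputable def Bmat {n : ℕ} (P : Matrix (Fin n) (Fin n) ℝ) (θhat : Fin n → ℝ) (χ : ℝ) :
    Matrix (Fin n ⊕ Unit) (Fin n ⊕ Unit) ℝ :=
  Matrix.fromBlocks P⁻¹
    (Matrix.of fun i _ => -(P⁻¹ *ᵥ θhat) i)
    (Matrix.of fun _ j => -(θhat ᵥ* P⁻¹) j)
    (Matrix.of fun _ _ => θhat ⬝ᵥ P⁻¹ *ᵥ θhat - χ)


lemma slemma_zero {V : Type*} [AddCommGroup V] [Module ℝ V] (f b : V → ℝ) (φ β : V → V → ℝ)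
    (hf : ∀ x y (s : ℝ), f (x + s • y) = f x + 2 * s * φ x y + s ^ 2 * f y)
    (hb : ∀ x y (s : ℝ), b (x + s • y) = b x + 2 * s * β x y + s ^ 2 * b y)
    (h : ∀ x, b x < 0 → f x ≤ 0) (x0 : V) (hx0 : b x0 < 0) (z : V) (hz : b z = 0) : f z ≤ 0 := by
  obtain ⟨σ, hσ, hσβ⟩ : ∃ σ : ℝ, σ ^ 2 = 1 ∧ σ * β z x0 ≤ 0 := by
    rcases le_total (β z x0) 0 with h1 | h1
    · exact ⟨1, by norm_num, by linarith⟩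
    · exact ⟨-1, by norm_num, by linarith⟩
  have key : ∀ ε : ℝ, 0 < ε → f z + 2 * (ε * σ) * φ z x0 + (ε * σ) ^ 2 * f x0 ≤ 0 := by
    intro ε hε
    rw [← hf]
    apply h
    rw [hb, hz, mul_pow, hσ]
    have h1 : ε * (σ * β z x0) ≤ 0 := mul_nonpos_of_nonneg_of_nonpos hε.le hσβ
    have h2 : ε ^ 2 * b x0 < 0 := mul_neg_of_pos_of_neg (by positivity) hx0
    nlinarith
  have ht : Filter.Tendsto (fun ε : ℝ => f z + 2 * (ε * σ) * φ z x0 + (ε * σ) ^ 2 * f x0)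
      (nhdsWithin 0 (Set.Ioi 0)) (nhds (f z)) := by
    have hc : Continuous (fun ε : ℝ => f z + 2 * (ε * σ) * φ z x0 + (ε * σ) ^ 2 * f x0) := by
      fun_prop
    have := (hc.tendsto 0).mono_left (nhdsWithin_le_nhds (s := Set.Ioi 0))
    simpa using this
  refine le_of_tendsto ht ?_
  filter_upwards [self_mem_nhdsWithin] with ε hε using key ε hε

lemma slemma {V : Type*} [AddCommGroup V] [Module ℝ V] (f b : V → ℝ) (φ β : V → V → ℝ)
    (hf : ∀ x y (s : ℝ), f (x + s • y) = f x + 2 * s * φ x y + s ^ 2 * f y)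
    (hb : ∀ x y (s : ℝ), b (x + s • y) = b x + 2 * s * β x y + s ^ 2 * b y)
    (h : ∀ x, b x < 0 → f x ≤ 0) (x0 : V) (hx0 : b x0 < 0) :
    ∃ ξ : ℝ, 0 ≤ ξ ∧ ∀ x, f x ≤ ξ * b x := by
  have key : ∀ x y, b x < 0 → 0 < b y → f y / b y ≤ f x / b x := by
    intro x y hx hy
    set D := β x y ^ 2 - b x * b y with hD
    have hDpos : β x y ^ 2 < D := by nlinarith [mul_pos (neg_pos.2 hx) hy]
    set r := Real.sqrt D with hr
    have hr2 : r ^ 2 = D := Real.sq_sqrt (by nlinarith [sq_nonneg (β x y)])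
    have hrβ : |β x y| < r := by
      rw [hr]; apply Real.lt_sqrt_of_sq_lt; rwa [sq_abs]
    obtain ⟨h1, h2⟩ := abs_lt.1 hrβ
    set p := (r - β x y) / b y with hp
    set q := (r + β x y) / b y with hq
    have hp0 : 0 < p := div_pos (by linarith) hy
    have hq0 : 0 < q := div_pos (by linarith) hy
    have hpb : p * b y = r - β x y := by rw [hp]; field_simp
    have hqb : q * b y = r + β x y := by rw [hq]; field_simp
    have zp : b (x + p • y) = 0 := by
      rw [hb]
      have : b y * (b x + 2 * p * β x y + p ^ 2 * b y) = 0 := by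
        linear_combination (2 * β x y + p * b y + (r - β x y)) * hpb + hr2 
      exact (mul_eq_zero.1 this).resolve_left hy.ne'
    have zq : b (x + (-q) • y) = 0 := by
      rw [hb]
      have : b y * (b x + 2 * (-q) * β x y + (-q) ^ 2 * b y) = 0 := by
        linear_combination (-2 * β x y + q * b y + (r + β x y)) * hqb + hr2
      exact (mul_eq_zero.1 this).resolve_left hy.ne'
    have fp := slemma_zero f b φ β hf hb h x0 hx0 _ zp
    have fq := slemma_zero f b φ β hf hb h x0 hx0 _ zq
    rw [hf] at fp fq
    have hpq : p * q * b y = - b x := by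
      have : b y * (p * q * b y + b x) = 0 := by
        linear_combination q * b y * hpb + (r - β x y) * hqb + hr2
      have := (mul_eq_zero.1 this).resolve_left hy.ne'
      linarith
    have hs : (p + q) * (f x + p * q * f y) ≤ 0 := by
      nlinarith [mul_nonpos_of_nonneg_of_nonpos hq0.le fp, mul_nonpos_of_nonneg_of_nonpos hp0.le fq]
    have hs' : f x + p * q * f y ≤ 0 := by
      by_contra hc
      push Not at hc
      exact absurd hs (not_le.2 (mul_pos (by linarith) hc))
    have hbx : b x = -(p * q * b y) := by linarith
    have hpq0 := mul_pos hp0 hq0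
    rw [hbx, div_neg, ← neg_div, div_le_div_iff₀ hy (by positivity)]
    nlinarith [mul_nonpos_of_nonneg_of_nonpos hy.le hs']
  set S : Set ℝ := {t | t = 0 ∨ ∃ y, 0 < b y ∧ t = f y / b y} with hS
  have hub : ∀ x, b x < 0 → ∀ t ∈ S, t ≤ f x / b x := by
    rintro x hx t (rfl | ⟨y, hy, rfl⟩)
    · exact div_nonneg_of_nonpos (h x hx) hx.le
    · exact key x y hx hy
  have hbdd : BddAbove S := ⟨_, hub x0 hx0⟩
  have hne : S.Nonempty := ⟨0, Or.inl rfl⟩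
  refine ⟨sSup S, le_csSup hbdd (Or.inl rfl), fun x => ?_⟩
  rcases lt_trichotomy (b x) 0 with hx | hx | hx
  · have := csSup_le hne (hub x hx)
    rwa [le_div_iff_of_neg hx] at this
  · rw [hx, mul_zero]; exact slemma_zero f b φ β hf hb h x0 hx0 x hx
  · have := le_csSup hbdd (Or.inr ⟨x, hx, rfl⟩ : f x / b x ∈ S)
    rwa [div_le_iff₀ hx] at this

lemma re_quad {ι : Type*} [Fintype ι] (M : Matrix ι ι ℂ) (x : ι → ℝ) :
    (star (fun i => (x i : ℂ)) ⬝ᵥ M *ᵥ (fun i => (x i : ℂ))).re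
      = x ⬝ᵥ (M.map Complex.re) *ᵥ x := by
  simp [dotProduct, mulVec]

lemma quad_expand {ι : Type*} [Fintype ι] (F : Matrix ι ι ℝ) (hF : Fᵀ = F) (x y : ι → ℝ) (s : ℝ) :
    (x + s • y) ⬝ᵥ F *ᵥ (x + s • y)
      = x ⬝ᵥ F *ᵥ x + 2 * s * (x ⬝ᵥ F *ᵥ y) + s ^ 2 * (y ⬝ᵥ F *ᵥ y) := by
  have h : y ⬝ᵥ F *ᵥ x = x ⬝ᵥ F *ᵥ y := by
    rw [dotProduct_mulVec, ← mulVec_transpose, hF, dotProduct_comm]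
  simp only [mulVec_add, mulVec_smul, dotProduct_add, add_dotProduct, smul_dotProduct,
    dotProduct_smul, smul_eq_mul, h]
  ring

lemma psd_map {ι : Type*} [Fintype ι] (M : Matrix ι ι ℝ) (hM : Mᵀ = M)
    (h : ∀ x : ι → ℝ, 0 ≤ x ⬝ᵥ M *ᵥ x) :
    (M.map (fun b => (b : ℂ))).PosSemidef := by
  have hH : (M.map (fun b => (b : ℂ))).IsHermitian := by
    ext i j
    have := congrFun (congrFun hM i) j
    simp only [transpose_apply] at this
    simp [this]
  refine .of_dotProduct_mulVec_nonneg hH fun z => ?_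
  rw [Complex.nonneg_iff]
  have him := hH.im_star_dotProduct_mulVec_self z
  refine ⟨?_, by simpa using him.symm⟩
  have h1 := h (fun i => (z i).re)
  have h2 := h (fun i => (z i).im)
  have : (star z ⬝ᵥ (M.map (fun b => (b : ℂ))) *ᵥ z).re =
      (fun i => (z i).re) ⬝ᵥ M *ᵥ (fun i => (z i).re) +
      (fun i => (z i).im) ⬝ᵥ M *ᵥ (fun i => (z i).im) := by
    simp [dotProduct, mulVec, Finset.sum_add_distrib]
  linarith

lemma herm_lmi {ι : Type*} [Fintype ι] (H : Matrix ι ι ℂ) (hH : H.IsHermitian)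
    (B : Matrix ι ι ℝ) (hB : Bᵀ = B) (x0 : ι → ℝ) (hx0 : x0 ⬝ᵥ B *ᵥ x0 < 0) :
    (∀ x : ι → ℝ, x ⬝ᵥ B *ᵥ x < 0 → x ⬝ᵥ (H.map Complex.re) *ᵥ x ≤ 0) ↔
    ∃ ξ : ℝ, 0 ≤ ξ ∧ ∃ X : Matrix ι ι ℝ, Xᵀ = -X ∧
      (-(H - (ξ : ℂ) • B.map (fun b => (b : ℂ)) +
        Complex.I • X.map (fun b => (b : ℂ)))).PosSemidef := by
  have hF : (H.map Complex.re)ᵀ = H.map Complex.re := by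
    ext i j
    have := congrArg Complex.re (congrFun (congrFun hH i) j)
    simpa using this
  constructor
  · intro h
    obtain ⟨ξ, hξ, hle⟩ := slemma (fun x => x ⬝ᵥ (H.map Complex.re) *ᵥ x) (fun x => x ⬝ᵥ B *ᵥ x)
      (fun x y => x ⬝ᵥ (H.map Complex.re) *ᵥ y) (fun x y => x ⬝ᵥ B *ᵥ y)
      (quad_expand _ hF) (quad_expand _ hB) h x0 hx0
    refine ⟨ξ, hξ, -(H.map Complex.im), ?_, ?_⟩
    · ext i j
      have := congrArg Complex.im (congrFun (congrFun hH i) j)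
      simp at this
      simp; linarith
    · have := psd_map (ξ • B - H.map Complex.re) (by rw [transpose_sub, transpose_smul, hF, hB])
        (fun x => by
          have := hle x
          simp only [sub_mulVec, dotProduct_sub, smul_mulVec, dotProduct_smul, smul_eq_mul]
          linarith)
      convert this using 1
      ext i j
      apply Complex.ext <;> simp
  · rintro ⟨ξ, hξ, X, -, hM⟩ x hx
    have h1 := (Complex.nonneg_iff.1 (hM.dotProduct_mulVec_nonneg (fun i => (x i : ℂ)))).1
    rw [re_quad] at h1
    have h2 : (-(H - (ξ : ℂ) • B.map (fun b => (b : ℂ)) +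
        Complex.I • X.map (fun b => (b : ℂ)))).map Complex.re = ξ • B - H.map Complex.re := by
      ext i j; simp
    rw [h2] at h1
    simp only [sub_mulVec, dotProduct_sub, smul_mulVec, dotProduct_smul, smul_eq_mul] at h1
    nlinarith [mul_nonpos_of_nonneg_of_nonpos hξ hx.le]

lemma A1_eq {n : ℕ} (ZD : Fin n → ℂ) :
    A1mat ZD = vecMulVec (star (Sum.elim ZD 1)) (Sum.elim ZD (1 : Unit → ℂ)) := by
  ext (i | i) (j | j) <;> simp [A1mat, vecMulVec]

lemma A2_eq {n : ℕ} (e : ℂ) (ZN ZD : Fin n → ℂ) :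
    A2mat e ZN ZD = vecMulVec (star (Sum.elim ZD 1)) (Sum.elim ZN (fun _ : Unit => e)) := by
  ext (i | i) (j | j) <;> simp [A2mat, vecMulVec]

lemma B_symm {n : ℕ} (P : Matrix (Fin n) (Fin n) ℝ) (hP : P.PosDef) (θhat : Fin n → ℝ) (χ : ℝ) :
    (Bmat P θhat χ)ᵀ = Bmat P θhat χ := by
  have h : (P⁻¹)ᵀ = P⁻¹ := by
    have := hP.inv.isHermitian.eq
    rwa [conjTranspose_eq_transpose_of_trivial] at this
  ext (i | i) (j | j)
  · simpa [Bmat] using congrFun (congrFun h i) j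
  · simp [Bmat, ← mulVec_transpose, h]
  · simp [Bmat, ← mulVec_transpose, h]
  · simp [Bmat]

lemma B_quad {n : ℕ} (P : Matrix (Fin n) (Fin n) ℝ) (hP : P.PosDef) (θhat : Fin n → ℝ) (χ : ℝ)
    (x : Fin n ⊕ Unit → ℝ) (t : ℝ) (θ : Fin n → ℝ) (hx : x = Sum.elim (t • θ) (fun _ => t)) :
    x ⬝ᵥ (Bmat P θhat χ) *ᵥ x = t ^ 2 * ((θ - θhat) ⬝ᵥ P⁻¹ *ᵥ (θ - θhat) - χ) := by
  have h : (P⁻¹)ᵀ = P⁻¹ := by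
    have := hP.inv.isHermitian.eq
    rwa [conjTranspose_eq_transpose_of_trivial] at this
  have hs : θhat ⬝ᵥ P⁻¹ *ᵥ θ = θ ⬝ᵥ P⁻¹ *ᵥ θhat := by
    rw [dotProduct_mulVec, ← mulVec_transpose, h, dotProduct_comm]
  have e1 : (Matrix.of fun i (_ : Unit) => -(P⁻¹ *ᵥ θhat) i) *ᵥ (fun _ => t)
      = -t • (P⁻¹ *ᵥ θhat) := by
    ext i; simp [mulVec, dotProduct]; ring
  have e2 : (Matrix.of fun (_ : Unit) j => -(θhat ᵥ* P⁻¹) j) *ᵥ (t • θ)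
      = fun _ => -t * (θhat ⬝ᵥ P⁻¹ *ᵥ θ) := by
    ext i
    rw [dotProduct_mulVec]
    simp [mulVec, dotProduct, Finset.mul_sum]
    exact Finset.sum_congr rfl fun _ _ => by ring
  have e3 : (Matrix.of fun (_ _ : Unit) => θhat ⬝ᵥ P⁻¹ *ᵥ θhat - χ) *ᵥ (fun _ => t)
      = fun _ => (θhat ⬝ᵥ P⁻¹ *ᵥ θhat - χ) * t := by
    ext i; simp [mulVec, dotProduct]
  rw [hx, Bmat, fromBlocks_mulVec]
  simp only [Sum.elim_comp_inl, Sum.elim_comp_inr, sumElim_dotProduct_sumElim, e1, e2, e3]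
  simp only [mulVec_smul, mulVec_sub, dotProduct_add, dotProduct_sub, sub_dotProduct,
    smul_dotProduct, dotProduct_smul, smul_eq_mul, hs]
  simp [dotProduct]
  ring

lemma H_quad {n : ℕ} (e : ℂ) (ZN ZD : Fin n → ℂ) (nb : ℂ) (a : ℝ)
    (x : Fin n ⊕ Unit → ℝ) (t : ℝ) (θ : Fin n → ℝ) (hx : x = Sum.elim (t • θ) (fun _ => t))
    (hD : (1 : ℂ) + ∑ i, ZD i * (θ i : ℂ) ≠ 0) :
    x ⬝ᵥ ((nb • (A2mat e ZN ZD)ᴴ + starRingEnd ℂ nb • A2mat e ZN ZD -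
              ((2 * a : ℝ) : ℂ) • A1mat ZD).map Complex.re) *ᵥ x =
     t ^ 2 * (2 * Complex.normSq (1 + ∑ i, ZD i * (θ i : ℂ)) *
        ((starRingEnd ℂ nb * Tval e ZN ZD θ).re - a)) := by
  rw [← re_quad]
  set y : Fin n ⊕ Unit → ℂ := fun i => (x i : ℂ) with hy
  have hys : star y = y := by ext i; simp [hy]
  have hd : Sum.elim ZD (1 : Unit → ℂ) ⬝ᵥ y = t * (1 + ∑ i, ZD i * (θ i : ℂ)) := by
    simp [hy, hx, dotProduct, mul_add, Finset.mul_sum, add_comm, mul_left_comm]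
  have hn : Sum.elim ZN (fun _ : Unit => e) ⬝ᵥ y = t * (e + ∑ i, ZN i * (θ i : ℂ)) := by
    simp [hy, hx, dotProduct, mul_add, Finset.mul_sum, add_comm, mul_left_comm, mul_comm]
  have hT : e + ∑ i, ZN i * (θ i : ℂ) = Tval e ZN ZD θ * (1 + ∑ i, ZD i * (θ i : ℂ)) := by
    rw [Tval, div_mul_cancel₀ _ hD]
  rw [hT] at hn
  generalize Tval e ZN ZD θ = T at *
  generalize (1 + ∑ i, ZD i * (θ i : ℂ)) = D at *
  have hds : y ⬝ᵥ star (Sum.elim ZD (1 : Unit → ℂ)) = star (t * D) := by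
    rw [← hd, ← star_dotProduct_star, hys]
  have hns : y ⬝ᵥ star (Sum.elim ZN (fun _ : Unit => e)) = star (t * (T * D)) := by
    rw [← hn, ← star_dotProduct_star, hys]
  rw [A1_eq, A2_eq, conjTranspose_vecMulVec, star_star, hys]
  simp only [sub_mulVec, add_mulVec, smul_mulVec, vecMulVec_mulVec, dotProduct_sub, dotProduct_add,
    dotProduct_smul, hd, hn, hds, hns, op_smul_eq_smul, smul_eq_mul]
  simp [Complex.normSq_apply]
  ring

lemma one_side {n : ℕ} (e : ℂ) (ZN ZD : Fin n → ℂ)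
    (P : Matrix (Fin n) (Fin n) ℝ) (hP : P.PosDef)
    (θhat : Fin n → ℝ) (χ : ℝ) (hχ : 0 < χ)
    (hden : ∀ θ ∈ ellipsoid P θhat χ, (1 : ℂ) + ∑ i, ZD i * (θ i : ℂ) ≠ 0)
    (nb : ℂ) (a : ℝ) :
    (∀ θ ∈ ellipsoid P θhat χ, (starRingEnd ℂ nb * Tval e ZN ZD θ).re ≤ a) ↔
      ∃ ξ : ℝ, 0 ≤ ξ ∧
        ∃ X : Matrix (Fin n ⊕ Unit) (Fin n ⊕ Unit) ℝ, Xᵀ = -X ∧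
          (-(nb • (A2mat e ZN ZD)ᴴ + starRingEnd ℂ nb • A2mat e ZN ZD -
              ((2 * a : ℝ) : ℂ) • A1mat ZD -
              (ξ : ℂ) • (Bmat P θhat χ).map (fun b => (b : ℂ)) +
              Complex.I • X.map (fun b => (b : ℂ)))).PosSemidef := by
  have hH : (nb • (A2mat e ZN ZD)ᴴ + starRingEnd ℂ nb • A2mat e ZN ZD -
              ((2 * a : ℝ) : ℂ) • A1mat ZD).IsHermitian := by
    rw [A1_eq, IsHermitian]
    simp only [conjTranspose_sub, conjTranspose_add, conjTranspose_smul,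
      conjTranspose_conjTranspose, conjTranspose_vecMulVec, star_star]
    simp [add_comm]
  have hP0 : ∀ v : Fin n → ℝ, 0 ≤ v ⬝ᵥ P⁻¹ *ᵥ v := fun v => by
    simpa using hP.inv.posSemidef.dotProduct_mulVec_nonneg v
  rw [← herm_lmi _ hH _ (B_symm P hP θhat χ) (Sum.elim θhat (fun _ => 1))]
  · constructor
    · intro h x hx
      obtain ⟨t, ht⟩ : ∃ t, x (Sum.inr ()) = t := ⟨_, rfl⟩
      have ht0 : t ≠ 0 := by
        rintro rfl
        have hxe : x = Sum.elim (x ∘ Sum.inl) (fun _ => 0) := by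
          ext (i | i)
          · rfl
          · exact ht
        have : x ⬝ᵥ (Bmat P θhat χ) *ᵥ x = (x ∘ Sum.inl) ⬝ᵥ P⁻¹ *ᵥ (x ∘ Sum.inl) := by
          have hz : (fun _ : Unit => (0 : ℝ)) = 0 := rfl
          rw [hxe, Bmat, fromBlocks_mulVec, sumElim_dotProduct_sumElim, hz]
          simp
        have := hP0 (x ∘ Sum.inl)
        linarith
      have hxe : x = Sum.elim (t • (t⁻¹ • (x ∘ Sum.inl))) (fun _ => t) := by
        ext (i | i)
        · simp [ht0]
        · exact ht
      have ht2 : 0 < t ^ 2 := by positivity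
      have hmem : t⁻¹ • (x ∘ Sum.inl) ∈ ellipsoid P θhat χ := by
        rw [B_quad P hP θhat χ x t _ hxe] at hx
        have := neg_of_mul_neg_right hx ht2.le
        simp only [ellipsoid, Set.mem_setOf_eq]
        linarith
      rw [H_quad e ZN ZD nb a x t _ hxe (hden _ hmem)]
      have := h _ hmem
      refine mul_nonpos_of_nonneg_of_nonpos ht2.le (mul_nonpos_of_nonneg_of_nonpos ?_ (by linarith))
      have := Complex.normSq_nonneg (1 + ∑ i, ZD i * (((t⁻¹ • (x ∘ Sum.inl)) i : ℝ) : ℂ))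
      linarith
    · intro h θ hθ
      have hxe : Sum.elim θ (fun _ : Unit => (1 : ℝ)) = Sum.elim ((1 : ℝ) • θ) (fun _ => 1) := by
        simp
      have h1 := h (Sum.elim θ (fun _ => 1)) (by
        rw [B_quad P hP θhat χ _ 1 θ hxe]
        have : (θ - θhat) ⬝ᵥ P⁻¹ *ᵥ (θ - θhat) < χ := hθ
        linarith)
      rw [H_quad e ZN ZD nb a _ 1 θ hxe (hden _ hθ)] at h1
      have := Complex.normSq_pos.2 (hden _ hθ)
      by_contra hc
      push Not at hc
      have := mul_pos this (sub_pos.2 hc)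
      linarith
  · rw [B_quad P hP θhat χ _ 1 θhat (by simp)]
    simpa using hχ

/-- Band embedding: `2a₂ ≤ conj(T(θ))·n_b + conj(n_b)·T(θ) ≤ 2a₁` (i.e.
`a₂ ≤ Re(conj(n_b)·T(θ)) ≤ a₁`) holds for every `θ` in the ellipsoid `U` iff there exist
`ξ₁, ξ₂ ≥ 0` and real skew-symmetric matrices `𝒳₁, 𝒳₂` such that the Hermitian matrices
`A₂*·n_b + conj(n_b)·A₂ − 2a₁·A₁ − ξ₁·B + i𝒳₁` and
`−A₂*·n_b − conj(n_b)·A₂ + 2a₂·A₁ − ξ₂·B + i𝒳₂` are both negative semidefinite. -/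
theorem band_embedding_iff_LMI {n : ℕ} (e : ℂ) (ZN ZD : Fin n → ℂ)
    (P : Matrix (Fin n) (Fin n) ℝ) (hP : P.PosDef)
    (θhat : Fin n → ℝ) (χ : ℝ) (hχ : 0 < χ)
    (hden : ∀ θ ∈ ellipsoid P θhat χ, (1 : ℂ) + ∑ i, ZD i * (θ i : ℂ) ≠ 0)
    (nb : ℂ) (a₁ a₂ : ℝ) :
    (∀ θ ∈ ellipsoid P θhat χ,
        a₂ ≤ (starRingEnd ℂ nb * Tval e ZN ZD θ).re ∧
          (starRingEnd ℂ nb * Tval e ZN ZD θ).re ≤ a₁) ↔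
      ∃ ξ₁ ξ₂ : ℝ, 0 ≤ ξ₁ ∧ 0 ≤ ξ₂ ∧
        ∃ X₁ X₂ : Matrix (Fin n ⊕ Unit) (Fin n ⊕ Unit) ℝ, X₁ᵀ = -X₁ ∧ X₂ᵀ = -X₂ ∧
          (-(nb • (A2mat e ZN ZD)ᴴ + starRingEnd ℂ nb • A2mat e ZN ZD -
              ((2 * a₁ : ℝ) : ℂ) • A1mat ZD -
              (ξ₁ : ℂ) • (Bmat P θhat χ).map (fun b => (b : ℂ)) +
              Complex.I • X₁.map (fun b => (b : ℂ)))).PosSemidef ∧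
          (-(-(nb • (A2mat e ZN ZD)ᴴ) - starRingEnd ℂ nb • A2mat e ZN ZD +
              ((2 * a₂ : ℝ) : ℂ) • A1mat ZD -
              (ξ₂ : ℂ) • (Bmat P θhat χ).map (fun b => (b : ℂ)) +
              Complex.I • X₂.map (fun b => (b : ℂ)))).PosSemidef := by
  have h1 := one_side e ZN ZD P hP θhat χ hχ hden nb a₁
  have h2 := one_side e ZN ZD P hP θhat χ hχ hden (-nb) (-a₂)
  have hM : ∀ (ξ : ℝ) (X : Matrix (Fin n ⊕ Unit) (Fin n ⊕ Unit) ℝ),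
      (-((-nb) • (A2mat e ZN ZD)ᴴ + starRingEnd ℂ (-nb) • A2mat e ZN ZD -
              ((2 * (-a₂) : ℝ) : ℂ) • A1mat ZD -
              (ξ : ℂ) • (Bmat P θhat χ).map (fun b => (b : ℂ)) +
              Complex.I • X.map (fun b => (b : ℂ)))) =
      (-(-(nb • (A2mat e ZN ZD)ᴴ) - starRingEnd ℂ nb • A2mat e ZN ZD +
              ((2 * a₂ : ℝ) : ℂ) • A1mat ZD -
              (ξ : ℂ) • (Bmat P θhat χ).map (fun b => (b : ℂ)) +
              Complex.I • X.map (fun b => (b : ℂ)))) := by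
    intro ξ X
    simp only [map_neg, neg_smul, mul_neg, Complex.ofReal_neg, sub_neg_eq_add, ← sub_eq_add_neg]
  simp only [hM] at h2
  constructor
  · intro h
    obtain ⟨ξ₁, hξ₁, X₁, hX₁, hP₁⟩ := h1.1 fun θ hθ => (h θ hθ).2
    obtain ⟨ξ₂, hξ₂, X₂, hX₂, hP₂⟩ := h2.1 fun θ hθ => by
      have := (h θ hθ).1
      rw [map_neg, neg_mul, Complex.neg_re]
      linarith
    exact ⟨ξ₁, ξ₂, hξ₁, hξ₂, X₁, X₂, hX₁, hX₂, hP₁, hP₂⟩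
  · rintro ⟨ξ₁, ξ₂, hξ₁, hξ₂, X₁, X₂, hX₁, hX₂, hP₁, hP₂⟩ θ hθ
    have g1 := h1.2 ⟨ξ₁, hξ₁, X₁, hX₁, hP₁⟩ θ hθ
    have g2 := h2.2 ⟨ξ₂, hξ₂, X₂, hX₂, hP₂⟩ θ hθ
    rw [map_neg, neg_mul, Complex.neg_re] at g2
    exact ⟨by linarith, g1⟩
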